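/- Let 1 ≤ i < j ≤ n-1. If F' is a complete flag in ℂ^n whose m-th subspace agrees with the m-th subspace of F_{i,j} for every m ≠ j, and F' ≠ F_{i,j}, then F' lies in the K-orbit of F_{i,j+1}; moreover such flags F' exist. (This realizes set-theoretically that α_j is complex stable for Q_{i,j} = K·F_{i,j} and that m(s_{α_j})*Q_{i,j} = Q_{i,j+1}.) -/

import Mathlib

open Module Submodule

noncomputable section

/-- `stdVec n m` is the `m`-th standard basis vector of `ℂ^n` (1-indexed); `0` out of range. -/
def stdVec (n m : ℕ) : Fin n → ℂ :=
  if h : 1 ≤ m ∧ m ≤ n then Pi.single (⟨m - 1, by omega⟩ : Fin n) 1 else 0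

/-- `stdSub n k` is the subspace `U_k = span(e_1, …, e_k)` of `ℂ^n`. -/
def stdSub (n k : ℕ) : Submodule ℂ (Fin n → ℂ) :=
  span ℂ (stdVec n '' Set.Icc 1 k)

/-- The action of an invertible linear map of `ℂ^n` on a chain of subspaces. -/
def actFlag (n : ℕ) (g : (Fin n → ℂ) ≃ₗ[ℂ] (Fin n → ℂ))
    (V : ℕ → Submodule ℂ (Fin n → ℂ)) (k : ℕ) : Submodule ℂ (Fin n → ℂ) :=
  Submodule.map g.toLinearMap (V k)

/-- The orbit of the chain `V` under a set `B` of invertible linear maps. -/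
def orbitOf (n : ℕ) (B : Set ((Fin n → ℂ) ≃ₗ[ℂ] (Fin n → ℂ)))
    (V : ℕ → Submodule ℂ (Fin n → ℂ)) : Set (ℕ → Submodule ℂ (Fin n → ℂ)) :=
  {V' | ∃ b ∈ B, actFlag n b V = V'}

/-- A complete flag in `ℂ^n`: `V k` is the `k`-dimensional member for `0 ≤ k ≤ n`;
values above `n` are pinned so that two flags are equal iff they agree in degrees `≤ n`. -/
def IsCompleteFlag (n : ℕ) (V : ℕ → Submodule ℂ (Fin n → ℂ)) : Prop :=
  (∀ k, k ≤ n → finrank ℂ ↥(V k) = k) ∧ (∀ k, V k ≤ V (k + 1)) ∧ (∀ k, n ≤ k → V k = V n)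

/-- The complete flag `(v 1 ⊂ v 2 ⊂ ⋯ ⊂ v n)` spanned by the vectors `v 1, …, v n`. -/
def flagOf (n : ℕ) (v : ℕ → Fin n → ℂ) (k : ℕ) : Submodule ℂ (Fin n → ℂ) :=
  span ℂ (v '' Set.Icc 1 (min k n))

/-- `K = {g ∈ GL(n,ℂ) : g e_n = e_n, g U_{n-1} = U_{n-1}}`, a copy of `GL(n-1,ℂ)`. -/
def Ksub (n : ℕ) : Set ((Fin n → ℂ) ≃ₗ[ℂ] (Fin n → ℂ)) :=
  {g | g (stdVec n n) = stdVec n n ∧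
       Submodule.map g.toLinearMap (stdSub n (n - 1)) = stdSub n (n - 1)}

/-- `V'` lies in the `K`-orbit of `V`. -/
def InKOrbit (n : ℕ) (V V' : ℕ → Submodule ℂ (Fin n → ℂ)) : Prop :=
  ∃ g ∈ Ksub n, actFlag n g V = V'

/-- Vectors of the representative flags: for `i = j` this gives the flag `F_i`
`(e_1 ⊂ ⋯ ⊂ e_{i-1} ⊂ e_n ⊂ e_i ⊂ ⋯ ⊂ e_{n-1})` (`e_n` in position `i`), and for
`i < j` the flag `F_{i,j}`
`(e_1 ⊂ ⋯ ⊂ e_{i-1} ⊂ e_i + e_n ⊂ e_{i+1} ⊂ ⋯ ⊂ e_{j-1} ⊂ e_n ⊂ e_j ⊂ ⋯ ⊂ e_{n-1})`. -/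
def repVec (n i j m : ℕ) : Fin n → ℂ :=
  if m < i then stdVec n m
  else if m = i then (if i < j then stdVec n i else 0) + stdVec n n
  else if m < j then stdVec n m
  else if m = j then stdVec n n
  else stdVec n (m - 1)

/-- `repFlag n i i = F_i` and `repFlag n i j = F_{i,j}` for `i < j`. -/
def repFlag (n i j : ℕ) : ℕ → Submodule ℂ (Fin n → ℂ) := flagOf n (repVec n i j)

/-!
`F_{i,j+1}` arises from `F_{i,j}` by swapping the spanning vectors `e_n` and `e_j` in positions `j`
and `j + 1`, so the two flags differ in degree `j` only, which already gives existence. A flag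
agreeing with `F_{i,j}` away from degree `j` corresponds to a point of the projective line of
`V_{j+1} / V_{j-1}`, spanned by `e_j` and `e_n`; unless it is `F_{i,j}` itself, its `j`-th member
contains some `e_j + c e_n`. Since `i < j`, this member also contains `e_i + e_n`, hence
`e_j - c e_i`. The transvection `x ↦ x - c x_j e_i` lies in `K`, sends `e_j` to `e_j - c e_i`, and
fixes every other spanning vector of `F_{i,j+1}`.
-/

section LinearAlgebra

variable {R M : Type*} [AddCommGroup M]

lemma map_transvection_eq_self [Ring R] [Module R M] {f : Dual R M} {v : M} (hfv : f v = 0)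
    {p : Submodule R M} (hv : v ∈ p) :
    p.map (LinearEquiv.transvection hfv).toLinearMap = p := by
  refine le_antisymm (map_le_iff_le_comap.2 fun x hx => ?_) fun x hx => ?_
  · exact add_mem hx (p.smul_mem _ hv)
  · exact ⟨x - f x • v, sub_mem hx (p.smul_mem _ hv), by simp [LinearMap.transvection.apply, hfv]⟩

lemma exists_add_smul_mem_of_not_le [DivisionRing R] [Module R M] {L W : Submodule R M} {u w : M}
    (hWL : W ≤ L) (hL : L ≤ R ∙ u ⊔ (R ∙ w ⊔ W)) (hnot : ¬ L ≤ R ∙ w ⊔ W) :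
    ∃ c : R, u + c • w ∈ L := by
  obtain ⟨x, hxL, hx⟩ := SetLike.not_le_iff_exists.1 hnot
  obtain ⟨_, hau, y, hy, rfl⟩ := mem_sup.1 (hL hxL)
  obtain ⟨a, rfl⟩ := mem_span_singleton.1 hau
  obtain ⟨_, hbw, z, hz, rfl⟩ := mem_sup.1 hy
  obtain ⟨b, rfl⟩ := mem_span_singleton.1 hbw
  have ha : a ≠ 0 := by
    rintro rfl
    exact hx (by simpa using hy)
  have hmem : a • u + b • w ∈ L := by
    simpa [← add_assoc] using sub_mem hxL (hWL hz)
  exact ⟨a⁻¹ * b, by simpa [mul_smul, ha] using L.smul_mem a⁻¹ hmem⟩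

end LinearAlgebra

section Flags

variable {n j k m : ℕ} {v : ℕ → Fin n → ℂ} {V W : ℕ → Submodule ℂ (Fin n → ℂ)}

lemma IsCompleteFlag.monotone (hV : IsCompleteFlag n V) : Monotone V :=
  monotone_nat_of_le_succ hV.2.1

lemma IsCompleteFlag.eq_of_le (hV : IsCompleteFlag n V) (hW : IsCompleteFlag n W)
    (hle : ∀ k ≤ n, V k ≤ W k) : V = W := by
  have heq : ∀ k ≤ n, V k = W k := fun k hk =>
    eq_of_le_of_finrank_eq (hle k hk) ((hV.1 k hk).trans (hW.1 k hk).symm)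
  funext k
  rcases le_total k n with hk | hk
  · exact heq k hk
  · rw [hV.2.2 k hk, hW.2.2 k hk, heq n le_rfl]

lemma IsCompleteFlag.actFlag (hV : IsCompleteFlag n V) (g : (Fin n → ℂ) ≃ₗ[ℂ] (Fin n → ℂ)) :
    IsCompleteFlag n (actFlag n g V) :=
  ⟨fun k hk => (g.finrank_map_eq (V k)).trans (hV.1 k hk), fun k => map_mono (hV.2.1 k),
    fun k hk => congrArg (map g.toLinearMap) (hV.2.2 k hk)⟩

lemma mem_flagOf (hm : 1 ≤ m) (hmk : m ≤ k) (hmn : m ≤ n) : v m ∈ flagOf n v k :=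
  subset_span ⟨m, ⟨hm, le_min hmk hmn⟩, rfl⟩

lemma flagOf_succ (v : ℕ → Fin n → ℂ) (hk : k < n) :
    flagOf n v (k + 1) = ℂ ∙ v (k + 1) ⊔ flagOf n v k := by
  rw [flagOf, flagOf, min_eq_left hk, min_eq_left hk.le, ← Order.succ_eq_add_one,
    Order.Icc_succ_right (by simp), Set.image_insert_eq, span_insert]

lemma actFlag_flagOf (g : (Fin n → ℂ) ≃ₗ[ℂ] (Fin n → ℂ)) (v : ℕ → Fin n → ℂ) :
    actFlag n g (flagOf n v) = flagOf n (g ∘ v) := by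
  funext k
  rw [actFlag, flagOf, flagOf, map_span, Set.image_comp]
  rfl

lemma flagOf_eq_span_range (v : ℕ → Fin n → ℂ) (hk : k ≤ n) :
    flagOf n v k = span ℂ (Set.range fun a : Fin k => v (a + 1)) := by
  rw [flagOf, min_eq_left hk]
  congr 1
  ext x
  constructor
  · rintro ⟨m, ⟨hm, hmk⟩, rfl⟩
    exact ⟨⟨m - 1, by omega⟩, congrArg v (by simp only; omega)⟩
  · rintro ⟨a, rfl⟩
    exact ⟨a + 1, ⟨by omega, a.2⟩, rfl⟩

lemma isCompleteFlag_flagOf (hv : flagOf n v n = ⊤) : IsCompleteFlag n (flagOf n v) := by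
  have hli : LinearIndependent ℂ fun a : Fin n => v (a + 1) :=
    linearIndependent_of_top_le_span_of_card_eq_finrank
      (by rw [← flagOf_eq_span_range v le_rfl, hv]) (by simp)
  refine ⟨fun k hk => ?_, fun k => ?_, fun k hk => ?_⟩
  · rw [flagOf_eq_span_range v hk]
    simpa [Function.comp_def] using
      finrank_span_eq_card (hli.comp (Fin.castLE hk) (Fin.castLE_injective hk))
  · exact span_mono (Set.image_mono (Set.Icc_subset_Icc_right (by omega)))
  · rw [flagOf, flagOf, min_eq_right hk, min_self]

lemma IsCompleteFlag.flagOf_eq_of_mem (hV : IsCompleteFlag n V)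
    (hv : IsCompleteFlag n (flagOf n v)) (hmem : ∀ m, 1 ≤ m → m ≤ n → v m ∈ V m) :
    flagOf n v = V := by
  refine hv.eq_of_le hV fun k _ => span_le.2 ?_
  rintro _ ⟨m, ⟨hm, hmk⟩, rfl⟩
  exact hV.monotone (hmk.trans (min_le_left k n)) (hmem m hm (hmk.trans (min_le_right k n)))

lemma IsCompleteFlag.notMem_flagOf (hv : IsCompleteFlag n (flagOf n v)) (hk : k < n) :
    v (k + 1) ∉ flagOf n v k := by
  intro hmem
  have heq : flagOf n v (k + 1) = flagOf n v k := by
    rw [flagOf_succ v hk, sup_eq_right, span_singleton_le_iff_mem]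
    exact hmem
  have hfinrank := hv.1 (k + 1) hk
  rw [heq, hv.1 k hk.le] at hfinrank
  omega

lemma flagOf_comp_swap (v : ℕ → Fin n → ℂ) (hj : 1 ≤ j) (hjn : j < n) (hk : k ≠ j) :
    flagOf n (v ∘ Equiv.swap j (j + 1)) k = flagOf n v k := by
  have hmaps : Set.MapsTo (Equiv.swap j (j + 1)) (Set.Icc 1 (min k n)) (Set.Icc 1 (min k n)) := by
    intro m hm
    rw [Set.mem_Icc] at hm ⊢
    rw [Equiv.swap_apply_def]
    split_ifs <;> omega
  have himage : Equiv.swap j (j + 1) '' Set.Icc 1 (min k n) = Set.Icc 1 (min k n) :=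
    hmaps.image_subset.antisymm fun m hm => ⟨_, hmaps hm, Equiv.swap_apply_self _ _ m⟩
  rw [flagOf, flagOf, Set.image_comp, himage]

lemma IsCompleteFlag.flagOf_comp_swap_ne (hv : IsCompleteFlag n (flagOf n v)) (hj : 1 ≤ j)
    (hjn : j < n) : flagOf n (v ∘ Equiv.swap j (j + 1)) ≠ flagOf n v := by
  intro heq
  have hmem : (v ∘ Equiv.swap j (j + 1)) j ∈ flagOf n (v ∘ Equiv.swap j (j + 1)) j :=
    mem_flagOf hj le_rfl hjn.le
  rw [heq, Function.comp_apply, Equiv.swap_apply_left] at hmem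
  exact hv.notMem_flagOf hjn hmem

lemma IsCompleteFlag.exists_add_smul_mem_of_ne_flagOf (hV : IsCompleteFlag n V)
    (hv : IsCompleteFlag n (flagOf n v)) (hj : 1 ≤ j) (hjn : j < n)
    (hagree : ∀ m, m ≠ j → V m = flagOf n v m) (hne : V ≠ flagOf n v) :
    ∃ c : ℂ, v (j + 1) + c • v j ∈ V j := by
  have hnot : ¬ V j ≤ flagOf n v j := fun hle => hne <| hV.eq_of_le hv fun k _ => by
    rcases eq_or_ne k j with rfl | hk
    · exact hle
    · exact (hagree k hk).le
  obtain ⟨q, rfl⟩ := Nat.exists_eq_add_of_le' hj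
  have hq : V q = flagOf n v q := hagree q (by omega)
  have hle : V (q + 1) ≤ flagOf n v (q + 2) := hagree (q + 2) (by omega) ▸ hV.2.1 (q + 1)
  rw [flagOf_succ v hjn, flagOf_succ v (by omega), ← hq] at hle
  rw [flagOf_succ v (by omega), ← hq] at hnot
  exact exists_add_smul_mem_of_not_le (hV.2.1 q) hle hnot

end Flags

section Representatives

variable {n i j m : ℕ}

lemma stdVec_apply (n m : ℕ) (p : Fin n) : stdVec n m p = if m = p + 1 then 1 else 0 := by
  unfold stdVec
  split_ifs with hm hmp hmp
  · simp [hmp]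
  · exact Pi.single_eq_of_ne (by rw [Ne, Fin.ext_iff]; simp only; omega) 1
  · omega
  · rfl

lemma stdSub_self (n : ℕ) : stdSub n n = ⊤ := by
  rw [eq_top_iff, ← (Pi.basisFun ℂ (Fin n)).span_eq, span_le]
  rintro _ ⟨p, rfl⟩
  refine subset_span ⟨p + 1, ⟨by omega, p.2⟩, ?_⟩
  ext q
  simp [stdVec_apply, Pi.single_apply, Fin.ext_iff, eq_comm]

lemma stdVec_mem_stdSub {k : ℕ} (hm : 1 ≤ m) (hmk : m ≤ k) : stdVec n m ∈ stdSub n k :=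
  subset_span ⟨m, ⟨hm, hmk⟩, rfl⟩

lemma transvection_mem_Ksub {f : Dual ℂ (Fin n → ℂ)} {v : Fin n → ℂ} (hfv : f v = 0)
    (hf : f (stdVec n n) = 0) (hv : v ∈ stdSub n (n - 1)) :
    LinearEquiv.transvection hfv ∈ Ksub n :=
  ⟨by simp [LinearMap.transvection.apply, hf], map_transvection_eq_self hfv hv⟩

lemma repVec_left (n : ℕ) (hij : i < j) : repVec n i j i = stdVec n i + stdVec n n := by
  simp [repVec, hij]

lemma repVec_right (n : ℕ) (hij : i ≤ j) : repVec n i j j = stdVec n n := by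
  rcases hij.eq_or_lt with rfl | hij
  · simp [repVec]
  · simp [repVec, hij.not_gt, hij.ne']

lemma repVec_of_lt (n : ℕ) (hmi : m ≠ i) (hmj : m < j) : repVec n i j m = stdVec n m := by
  simp [repVec, hmi, hmj]

lemma repVec_succ (n : ℕ) (hij : i ≤ j) (hjm : j ≤ m) : repVec n i j (m + 1) = stdVec n m := by
  unfold repVec
  split_ifs <;> first | omega | rfl

lemma repVec_succ_right (n : ℕ) (hij : i < j) :
    repVec n i (j + 1) = repVec n i j ∘ Equiv.swap j (j + 1) := by
  funext m
  rw [Function.comp_apply, Equiv.swap_apply_def]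
  split_ifs with hmj hmj'
  · rw [hmj, repVec_of_lt n hij.ne' j.lt_succ_self, repVec_succ n hij.le le_rfl]
  · rw [hmj', repVec_right n hij.le, repVec_right n (by omega)]
  · unfold repVec
    split_ifs <;> first | omega | rfl

lemma repVec_succ_right_apply_eq_zero {p : Fin n} (hjn : j < n) (hmj : m ≠ j)
    (hp : (p : ℕ) + 1 = j) : repVec n i (j + 1) m p = 0 := by
  unfold repVec
  split_ifs <;> simp only [Pi.add_apply, Pi.zero_apply, stdVec_apply] <;> grind

lemma isCompleteFlag_repFlag (hi : 1 ≤ i) (hij : i ≤ j) (hj : j ≤ n) :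
    IsCompleteFlag n (repFlag n i j) := by
  refine isCompleteFlag_flagOf (top_unique ?_)
  have hmem : ∀ m, 1 ≤ m → m ≤ n → repVec n i j m ∈ flagOf n (repVec n i j) n :=
    fun m hm hmn => mem_flagOf hm hmn hmn
  have hlast : stdVec n n ∈ flagOf n (repVec n i j) n :=
    repVec_right n hij ▸ hmem j (by omega) hj
  rw [← stdSub_self n, stdSub, span_le]
  rintro _ ⟨m, ⟨hm, hmn⟩, rfl⟩
  rcases hmn.eq_or_lt with rfl | hmn
  · exact hlast
  rcases le_or_gt j m with hjm | hmj
  · exact repVec_succ n hij hjm ▸ hmem (m + 1) (by omega) hmn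
  rcases eq_or_ne m i with rfl | hmi
  · have hleft := hmem m hm hmn.le
    rw [repVec_left n hmj] at hleft
    simpa using sub_mem hleft hlast
  · exact repVec_of_lt n hmi hmj ▸ hmem m hm hmn.le

lemma repFlag_succ_right (hij : i < j) (hjn : j < n) (hm : m ≠ j) :
    repFlag n i (j + 1) m = repFlag n i j m := by
  rw [repFlag, repVec_succ_right n hij]
  exact flagOf_comp_swap _ (by omega) hjn hm

lemma repFlag_succ_right_ne (hi : 1 ≤ i) (hij : i < j) (hjn : j < n) :
    repFlag n i (j + 1) ≠ repFlag n i j := by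
  rw [repFlag, repVec_succ_right n hij]
  exact (isCompleteFlag_repFlag hi hij.le hjn.le).flagOf_comp_swap_ne (by omega) hjn

lemma inKOrbit_of_stdVec_add_smul_mem {V : ℕ → Submodule ℂ (Fin n → ℂ)} {c : ℂ} (hi : 1 ≤ i)
    (hij : i < j) (hjn : j < n) (hV : IsCompleteFlag n V)
    (hagree : ∀ m, m ≠ j → V m = repFlag n i (j + 1) m)
    (hc : stdVec n j + c • stdVec n i ∈ V j) :
    InKOrbit n (repFlag n i (j + 1)) V := by
  let p : Fin n := ⟨j - 1, by omega⟩
  have hp : (p : ℕ) + 1 = j := Nat.sub_add_cancel (by omega)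
  let f : Dual ℂ (Fin n → ℂ) := c • LinearMap.proj p
  have hf : ∀ x, f x = c * x p := fun _ => rfl
  have hfi : f (stdVec n i) = 0 := by simp [hf, stdVec_apply, hp, hij.ne]
  have hfn : f (stdVec n n) = 0 := by simp [hf, stdVec_apply, hp, hjn.ne']
  have hfj : f (stdVec n j) = c := by simp [hf, stdVec_apply, hp]
  let g := LinearEquiv.transvection hfi
  have hg : ∀ x, g x = x + f x • stdVec n i := fun _ => rfl
  refine ⟨g, transvection_mem_Ksub hfi hfn (stdVec_mem_stdSub hi (by omega)), ?_⟩
  have hcomplete := (isCompleteFlag_repFlag hi (by omega) hjn).actFlag g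
  rw [repFlag, actFlag_flagOf] at hcomplete ⊢
  refine hV.flagOf_eq_of_mem hcomplete fun m hm hmn => ?_
  rw [Function.comp_apply, hg]
  rcases eq_or_ne m j with rfl | hmj
  · rwa [repVec_of_lt n hij.ne' m.lt_succ_self, hfj]
  · rw [hf, repVec_succ_right_apply_eq_zero hjn hmj hp, mul_zero, zero_smul, add_zero,
      hagree m hmj]
    exact mem_flagOf hm le_rfl hmn

lemma exists_stdVec_add_smul_mem_of_ne_repFlag {V : ℕ → Submodule ℂ (Fin n → ℂ)} (hi : 1 ≤ i)
    (hij : i < j) (hjn : j < n) (hV : IsCompleteFlag n V)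
    (hagree : ∀ m, m ≠ j → V m = repFlag n i j m) (hne : V ≠ repFlag n i j) :
    ∃ c : ℂ, stdVec n j + c • stdVec n i ∈ V j := by
  obtain ⟨c, hc⟩ := hV.exists_add_smul_mem_of_ne_flagOf (isCompleteFlag_repFlag hi hij.le hjn.le)
    (by omega) hjn hagree hne
  rw [repVec_succ n hij.le le_rfl, repVec_right n hij.le] at hc
  have hi_mem : stdVec n i + stdVec n n ∈ V j := by
    refine hV.monotone hij.le ?_
    rw [hagree i hij.ne, ← repVec_left n hij]
    exact mem_flagOf hi le_rfl (by omega)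
  refine ⟨-c, ?_⟩
  convert sub_mem hc ((V j).smul_mem c hi_mem) using 1
  module

end Representatives

/-- If a complete flag agrees with `F_{i,j}` in every degree `m ≠ j` (`1 ≤ i < j ≤ n-1`)
and differs from `F_{i,j}`, then it lies in the `K`-orbit of `F_{i,j+1}`; moreover such
flags exist (the root `α_j` is complex stable for `Q_{i,j}` and
`m(s_{α_j}) * Q_{i,j} = Q_{i,j+1}`). -/
theorem stmt_15 (n : ℕ) (hn : 2 ≤ n) (i j : ℕ) (hi1 : 1 ≤ i) (hij : i < j)
    (hj : j ≤ n - 1) :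
    (∀ V : ℕ → Submodule ℂ (Fin n → ℂ), IsCompleteFlag n V →
      (∀ m, m ≠ j → V m = repFlag n i j m) → V ≠ repFlag n i j →
      InKOrbit n (repFlag n i (j + 1)) V) ∧
    (∃ V, IsCompleteFlag n V ∧ (∀ m, m ≠ j → V m = repFlag n i j m) ∧
      V ≠ repFlag n i j) := by
  have hjn : j < n := by omega
  have hagree : ∀ m, m ≠ j → repFlag n i (j + 1) m = repFlag n i j m :=
    fun m hm => repFlag_succ_right hij hjn hm
  refine ⟨fun V hV hVF hne => ?_, repFlag n i (j + 1),
    isCompleteFlag_repFlag hi1 (by omega) hjn, hagree, repFlag_succ_right_ne hi1 hij hjn⟩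
  obtain ⟨c, hc⟩ := exists_stdVec_add_smul_mem_of_ne_repFlag hi1 hij hjn hV hVF hne
  exact inKOrbit_of_stdVec_add_smul_mem hi1 hij hjn hV
    (fun m hm => (hVF m hm).trans (hagree m hm).symm) hc
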